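/- Assume σ₂ : ℝ → ℝ is C¹ with σ₂(x + 1/2) = σ₂(x) for all x, and set M̃_E := max_{x ∈ [0,1/2]} |σ₂'(x)|. Let (σ₁, σ₃) be a classical solution of the system of weakly nonlinear gas dynamics on ℝ × [0,T], 1-periodic in x, with σ₁, σ₃ of class C². Then for every t ∈ [0,T]: ∫₀¹ |∂_x σ₁(x,t)| dx + ∫₀¹ |∂_x σ₃(x,t)| dx ≤ ( ∫₀¹ |∂_x σ₁(x,0)| dx + ∫₀¹ |∂_x σ₃(x,0)| dx ) · exp( (β/2) M̃_E t ). -/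

import Mathlib

open MeasureTheory Set

/-- Classical solution of the system of weakly nonlinear gas dynamics on
`ℝ × [0,T]`: 1-periodic in `x` and satisfying both equations pointwise
(time derivatives taken within `[0,T]`). -/
def IsClassicalSolution (α β : ℝ) (σ₂ : ℝ → ℝ) (T : ℝ)
    (σ₁ σ₃ : ℝ → ℝ → ℝ) : Prop :=
  (∀ x t, σ₁ (x + 1) t = σ₁ x t) ∧ (∀ x t, σ₃ (x + 1) t = σ₃ x t) ∧
  ∀ x : ℝ, ∀ t ∈ Set.Icc (0 : ℝ) T,
    (derivWithin (fun s => σ₁ x s) (Set.Icc 0 T) t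
        + (α / 2) * deriv (fun y => (σ₁ y t) ^ 2) x
        + (β / 2) * ∫ y in (-1 : ℝ)..1,
            (1 / 2) * deriv σ₂ ((x + y) / 2) * σ₃ y t = 0) ∧
    (derivWithin (fun s => σ₃ x s) (Set.Icc 0 T) t
        - (α / 2) * deriv (fun y => (σ₃ y t) ^ 2) x
        - (β / 2) * ∫ y in (-1 : ℝ)..1,
            (1 / 2) * deriv σ₂ ((x + y) / 2) * σ₁ y t = 0)

/-!
Differentiating the first equation in `x`, the derivative `u = ∂ₓσ₁` satisfies
`∂ₜu + α ∂ₓ(σ₁ u) = (β/2) K(∂ₓσ₃)`, where the interaction `K` is a convolution in disguise and so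
commutes with `∂ₓ` up to sign. Multiplied by `sign u`, the transport term becomes the exact
derivative `α ∂ₓ(σ₁ |u|)`, which integrates to zero over a period, while
`|K(∂ₓσ₃)| ≤ M ∫₀¹ |∂ₓσ₃|` for any bound `M` of `|σ₂'|`. The second equation is symmetric, so the
sum `V` of the two `L¹` norms satisfies `V' ≤ (β/2) M V` and Grönwall's inequality applies. Since
`|u|` need not be differentiable, it is replaced by `√(u² + ε²)`; this costs an error `O(ε²)` in
the transport term, and `ε → 0` at the end.
-/

open Filter Topology Function
open scoped NNReal

section TwoVariables

variable {E : Type*} [NormedAddCommGroup E] [NormedSpace ℝ E] {w : ℝ → ℝ → E}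

/-- The partial derivative `∂ₓw` of a function `w x t` of space and time. -/
noncomputable def spaceDeriv (w : ℝ → ℝ → E) (x t : ℝ) : E := deriv (fun y => w y t) x

/-- The partial derivative `∂ₜw` of a function `w x t` of space and time. -/
noncomputable def timeDeriv (w : ℝ → ℝ → E) (x t : ℝ) : E := deriv (fun s => w x s) t

lemma contDiff_slice {n : WithTop ℕ∞} (hw : ContDiff ℝ n (uncurry w)) (t : ℝ) :
    ContDiff ℝ n (fun x => w x t) :=
  hw.comp (contDiff_prodMk_left t)

lemma hasDerivAt_space (hw : Differentiable ℝ (uncurry w)) (x t : ℝ) :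
    HasDerivAt (fun y => w y t) (fderiv ℝ (uncurry w) (x, t) (1, 0)) x :=
  (hw (x, t)).hasFDerivAt.comp_hasDerivAt (f := fun y => (y, t)) x
    ((hasDerivAt_id x).prodMk (hasDerivAt_const x t))

lemma hasDerivAt_time (hw : Differentiable ℝ (uncurry w)) (x t : ℝ) :
    HasDerivAt (fun s => w x s) (fderiv ℝ (uncurry w) (x, t) (0, 1)) t :=
  (hw (x, t)).hasFDerivAt.comp_hasDerivAt (f := fun s => (x, s)) t
    ((hasDerivAt_const t x).prodMk (hasDerivAt_id t))

lemma uncurry_spaceDeriv (hw : Differentiable ℝ (uncurry w)) :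
    uncurry (spaceDeriv w) = fun p => fderiv ℝ (uncurry w) p (1, 0) :=
  funext fun p => (hasDerivAt_space hw p.1 p.2).deriv

lemma uncurry_timeDeriv (hw : Differentiable ℝ (uncurry w)) :
    uncurry (timeDeriv w) = fun p => fderiv ℝ (uncurry w) p (0, 1) :=
  funext fun p => (hasDerivAt_time hw p.1 p.2).deriv

lemma contDiff_spaceDeriv {m n : WithTop ℕ∞} (hw : ContDiff ℝ n (uncurry w)) (hmn : m + 1 ≤ n) :
    ContDiff ℝ m (uncurry (spaceDeriv w)) := by
  have hn : n ≠ 0 := (one_pos.trans_le (le_add_self.trans hmn)).ne'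
  rw [uncurry_spaceDeriv (hw.differentiable hn)]
  exact (hw.fderiv_right hmn).clm_apply contDiff_const

lemma contDiff_timeDeriv {m n : WithTop ℕ∞} (hw : ContDiff ℝ n (uncurry w)) (hmn : m + 1 ≤ n) :
    ContDiff ℝ m (uncurry (timeDeriv w)) := by
  have hn : n ≠ 0 := (one_pos.trans_le (le_add_self.trans hmn)).ne'
  rw [uncurry_timeDeriv (hw.differentiable hn)]
  exact (hw.fderiv_right hmn).clm_apply contDiff_const

lemma derivWithin_time_eq_timeDeriv (hw : Differentiable ℝ (uncurry w)) {s : Set ℝ} {t : ℝ}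
    (hs : UniqueDiffWithinAt ℝ s t) (x : ℝ) :
    derivWithin (fun s => w x s) s t = timeDeriv w x t :=
  (hasDerivAt_time hw x t).differentiableAt.derivWithin hs

lemma timeDeriv_spaceDeriv_comm (hw : ContDiff ℝ 2 (uncurry w)) :
    timeDeriv (spaceDeriv w) = spaceDeriv (timeDeriv w) := by
  have hw₁ : Differentiable ℝ (uncurry w) := hw.differentiable two_ne_zero
  have hDw : Differentiable ℝ (fderiv ℝ (uncurry w)) :=
    (hw.fderiv_right (m := 1) (by norm_num)).differentiable one_ne_zero
  have fderiv_apply (v v' : ℝ × ℝ) (p : ℝ × ℝ) :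
      fderiv ℝ (fun q => fderiv ℝ (uncurry w) q v) p v' =
        fderiv ℝ (fderiv ℝ (uncurry w)) p v' v := by
    simp [fderiv_clm_apply (hDw p) (differentiableAt_const v)]
  ext x t
  have hxt := hasDerivAt_time
    ((contDiff_spaceDeriv (m := 1) hw (by norm_num)).differentiable one_ne_zero) x t
  have htx := hasDerivAt_space
    ((contDiff_timeDeriv (m := 1) hw (by norm_num)).differentiable one_ne_zero) x t
  rw [uncurry_spaceDeriv hw₁, fderiv_apply] at hxt
  rw [uncurry_timeDeriv hw₁, fderiv_apply] at htx
  have hsymm : IsSymmSndFDerivAt ℝ (uncurry w) (x, t) :=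
    hw.contDiffAt.isSymmSndFDerivAt (by simp)
  exact hxt.deriv.trans ((hsymm.eq _ _).trans htx.deriv.symm)

end TwoVariables

lemma hasDerivAt_intervalIntegral_smul {E : Type*} [NormedAddCommGroup E] [NormedSpace ℝ E]
    {φ : ℝ → ℝ} {f f' : ℝ → ℝ → E} {a b : ℝ} (hφ : IntervalIntegrable φ volume a b)
    (hf : ∀ x z, HasDerivAt (fun y => f y z) (f' x z) x) (hfc : ∀ x, Continuous (f x))
    (hfc' : Continuous (uncurry f')) (x : ℝ) :
    HasDerivAt (fun y => ∫ z in a..b, φ z • f y z) (∫ z in a..b, φ z • f' x z) x := by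
  obtain ⟨C, hC⟩ := (isCompact_Icc (a := x - 1) (b := x + 1)).prod
    (isCompact_uIcc (a := a) (b := b)) |>.exists_bound_of_continuousOn hfc'.continuousOn
  have hint (g : ℝ → E) (hg : Continuous g) :
      IntervalIntegrable (fun z => φ z • g z) volume a b := hφ.smul_continuousOn hg.continuousOn
  refine (intervalIntegral.hasDerivAt_integral_of_dominated_loc_of_deriv_le
    (bound := fun z => ‖φ z‖ * C) (Icc_mem_nhds (sub_one_lt x) (lt_add_one x))
    (.of_forall fun y => (hint _ (hfc y)).def'.aestronglyMeasurable) (hint _ (hfc x))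
    (hint _ (hfc'.uncurry_left x)).def'.aestronglyMeasurable ?_ (hφ.norm.mul_const C)
    (.of_forall fun z _ y _ => (hf y z).const_smul (φ z))).2
  refine .of_forall fun z hz y hy => (norm_smul (φ z) (f' y z)).trans_le ?_
  gcongr
  exact hC (y, z) ⟨hy, uIoc_subset_uIcc hz⟩

section PeriodicDerivative

variable {f : ℝ → ℝ} {c : ℝ}

lemma periodic_deriv (hf : Periodic f c) : Periodic (deriv f) c := fun x => by
  rw [← deriv_comp_add_const, show (fun y => f (y + c)) = f from funext hf]

lemma intervalIntegral_deriv_eq_zero_of_periodic (hf : Periodic f c) (hfd : ContDiff ℝ 1 f) :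
    ∫ x in (0 : ℝ)..c, deriv f x = 0 := by
  rw [intervalIntegral.integral_deriv_eq_sub (fun x _ => hfd.differentiable one_ne_zero x)
    ((hfd.continuous_deriv le_rfl).intervalIntegrable _ _), hf.eq, sub_self]

lemma lipschitzWith_of_periodic_of_abs_deriv_le {C : ℝ≥0} (hf : Differentiable ℝ f)
    (hper : Periodic f c) (hc : 0 < c) (hC : ∀ x ∈ Icc 0 c, |deriv f x| ≤ C) :
    LipschitzWith C f := by
  refine lipschitzWith_of_nnnorm_deriv_le hf fun x => ?_
  obtain ⟨y, hy, hxy⟩ := (periodic_deriv hper).exists_mem_Ico₀ hc x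
  rw [hxy]
  exact hC y (Ico_subset_Icc_self hy)

end PeriodicDerivative

section SmoothAbs

/-- The smooth approximation `√(s² + ε²)` of `|s|`. -/
noncomputable def smoothAbs (ε s : ℝ) : ℝ := √(s ^ 2 + ε ^ 2)

/-- The derivative `s / √(s² + ε²)` of `smoothAbs ε`, a smooth approximation of the sign of `s`. -/
noncomputable def smoothSign (ε s : ℝ) : ℝ := s / smoothAbs ε s

variable {ε : ℝ}

lemma smoothAbs_pos (hε : ε ≠ 0) (s : ℝ) : 0 < smoothAbs ε s := Real.sqrt_pos.2 (by positivity)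

lemma sq_smoothAbs (ε s : ℝ) : smoothAbs ε s ^ 2 = s ^ 2 + ε ^ 2 := Real.sq_sqrt (by positivity)

lemma abs_le_smoothAbs (ε s : ℝ) : |s| ≤ smoothAbs ε s :=
  Real.abs_le_sqrt (le_add_of_nonneg_right (sq_nonneg ε))

lemma smoothAbs_le_abs_add_abs (ε s : ℝ) : smoothAbs ε s ≤ |s| + |ε| := by
  refine Real.sqrt_le_iff.2 ⟨by positivity, ?_⟩
  nlinarith [sq_abs s, sq_abs ε, mul_nonneg (abs_nonneg s) (abs_nonneg ε)]

lemma continuous_smoothAbs (ε : ℝ) : Continuous (smoothAbs ε) := by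
  unfold smoothAbs; fun_prop

lemma contDiff_smoothAbs {n : WithTop ℕ∞} (hε : ε ≠ 0) : ContDiff ℝ n (smoothAbs ε) :=
  ContDiff.sqrt (by fun_prop) fun s => by positivity

lemma hasDerivAt_smoothAbs (hε : ε ≠ 0) (s : ℝ) :
    HasDerivAt (smoothAbs ε) (smoothSign ε s) s := by
  have hsq : HasDerivAt (fun s : ℝ => s ^ 2 + ε ^ 2) (2 * s) s := by
    simpa using (hasDerivAt_pow 2 s).add_const (ε ^ 2)
  refine (hsq.sqrt (by positivity)).congr_deriv ?_
  exact mul_div_mul_left s (smoothAbs ε s) two_ne_zero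

lemma continuous_smoothSign (hε : ε ≠ 0) : Continuous (smoothSign ε) :=
  continuous_id.div (continuous_smoothAbs ε) fun s => (smoothAbs_pos hε s).ne'

lemma abs_smoothSign_le_one (ε s : ℝ) : |smoothSign ε s| ≤ 1 := by
  rw [smoothSign, abs_div]
  exact div_le_one_of_le₀ ((abs_le_smoothAbs ε s).trans (le_abs_self _)) (abs_nonneg _)

lemma smoothSign_mul_sq (hε : ε ≠ 0) (s : ℝ) :
    smoothSign ε s * s ^ 2 = s * smoothAbs ε s - ε ^ 2 * smoothSign ε s := by
  have hpos := (smoothAbs_pos hε s).ne'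
  rw [smoothSign]
  field_simp
  rw [sq_smoothAbs]
  ring

lemma abs_intervalIntegral_smoothSign_mul_le {C : ℝ} {u g : ℝ → ℝ} (hg : ∀ x, |g x| ≤ C) :
    |∫ x in (0 : ℝ)..1, smoothSign ε (u x) * g x| ≤ C := by
  have hbound : ∀ x ∈ uIoc (0 : ℝ) 1, ‖smoothSign ε (u x) * g x‖ ≤ C := fun x _ => by
    rw [Real.norm_eq_abs, abs_mul]
    exact (mul_le_of_le_one_left (abs_nonneg _) (abs_smoothSign_le_one _ _)).trans (hg x)
  simpa using intervalIntegral.norm_integral_le_of_norm_le_const hbound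

end SmoothAbs

section Transport

variable {ε : ℝ} {f : ℝ → ℝ}

-- `φ(f')·(f'² + f f'') = (f Φ(f'))' - ε² φ(f')` for `Φ = smoothAbs ε`, `φ = Φ'`.
lemma abs_intervalIntegral_smoothSign_mul_flux_le (hε : ε ≠ 0) (hf : ContDiff ℝ 2 f)
    (hper : Periodic f 1) :
    |∫ x in (0 : ℝ)..1, smoothSign ε (deriv f x) * (deriv f x ^ 2 + f x * deriv (deriv f) x)| ≤
      ε ^ 2 := by
  have hf' : ContDiff ℝ 1 (deriv f) := hf.deriv' (n := 1)
  set G : ℝ → ℝ := fun x => f x * smoothAbs ε (deriv f x)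
  have hG : ContDiff ℝ 1 G := (hf.of_le one_le_two).mul ((contDiff_smoothAbs hε).comp hf')
  have hGper : Periodic G 1 := fun x => by simp only [G, hper x, periodic_deriv hper x]
  have hG' (x : ℝ) : deriv G x = deriv f x * smoothAbs ε (deriv f x) +
      f x * (smoothSign ε (deriv f x) * deriv (deriv f) x) :=
    ((hf.differentiable two_ne_zero x).hasDerivAt.mul ((hasDerivAt_smoothAbs hε _).comp x
      (hf'.differentiable one_ne_zero x).hasDerivAt)).deriv
  have hflux (x : ℝ) : smoothSign ε (deriv f x) * (deriv f x ^ 2 + f x * deriv (deriv f) x) =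
      deriv G x - smoothSign ε (deriv f x) * ε ^ 2 := by
    rw [hG', mul_add, smoothSign_mul_sq hε]; ring
  have hsign : Continuous fun x => smoothSign ε (deriv f x) :=
    (continuous_smoothSign hε).comp hf'.continuous
  simp only [hflux]
  rw [intervalIntegral.integral_sub ((hG.continuous_deriv le_rfl).intervalIntegrable _ _)
    ((hsign.mul_const _).intervalIntegrable _ _),
    intervalIntegral_deriv_eq_zero_of_periodic hGper hG, zero_sub, abs_neg]
  exact abs_intervalIntegral_smoothSign_mul_le fun _ => (abs_of_nonneg (sq_nonneg ε)).le

lemma intervalIntegral_smoothSign_mul_le {a C : ℝ} {g : ℝ → ℝ} (hε : ε ≠ 0) (hf : ContDiff ℝ 2 f)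
    (hper : Periodic f 1) (hg : Continuous g)
    (hC : ∀ x, |g x + a * (deriv f x ^ 2 + f x * deriv (deriv f) x)| ≤ C) :
    ∫ x in (0 : ℝ)..1, smoothSign ε (deriv f x) * g x ≤ |a| * ε ^ 2 + C := by
  set flux : ℝ → ℝ := fun x => deriv f x ^ 2 + f x * deriv (deriv f) x
  have hf' : ContDiff ℝ 1 (deriv f) := hf.deriv' (n := 1)
  have hf'' : Continuous (deriv (deriv f)) := hf'.continuous_deriv le_rfl
  have hflux : Continuous flux := (hf'.continuous.pow 2).add (hf.continuous.mul hf'')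
  have hsign : Continuous fun x => smoothSign ε (deriv f x) :=
    (continuous_smoothSign hε).comp hf'.continuous
  have hsplit : ∫ x in (0 : ℝ)..1, smoothSign ε (deriv f x) * g x =
      (∫ x in (0 : ℝ)..1, smoothSign ε (deriv f x) * (g x + a * flux x)) -
        a * ∫ x in (0 : ℝ)..1, smoothSign ε (deriv f x) * flux x := by
    rw [← intervalIntegral.integral_const_mul, ← intervalIntegral.integral_sub
      (Continuous.intervalIntegrable (by fun_prop) _ _)
      (Continuous.intervalIntegrable (by fun_prop) _ _)]
    congr! 2 with x
    ring
  calc ∫ x in (0 : ℝ)..1, smoothSign ε (deriv f x) * g x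
      ≤ |∫ x in (0 : ℝ)..1, smoothSign ε (deriv f x) * (g x + a * flux x)| +
        |a * ∫ x in (0 : ℝ)..1, smoothSign ε (deriv f x) * flux x| := by
        rw [hsplit]; exact (le_abs_self _).trans (abs_sub _ _)
    _ ≤ C + |a| * ε ^ 2 := by
        rw [abs_mul]
        gcongr
        · exact abs_intervalIntegral_smoothSign_mul_le hC
        · exact abs_intervalIntegral_smoothSign_mul_flux_le hε hf hper
    _ = |a| * ε ^ 2 + C := add_comm _ _

end Transport

section Interaction

/-- The nonlocal interaction operator `(K r)(x) = ∫_{-1}^{1} (1/2) k((x + y)/2) r(y) dy` of the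
system, whose kernel is `k = σ₂'`. -/
noncomputable def interaction (k r : ℝ → ℝ) (x : ℝ) : ℝ :=
  ∫ y in (-1 : ℝ)..1, (1 / 2) * k ((x + y) / 2) * r y

variable {k r : ℝ → ℝ}

lemma interaction_eq_integral_comp_sub (hk : Periodic k 1) (hr : Periodic r 2) (x : ℝ) :
    interaction k r x = ∫ z in (-1 : ℝ)..1, (1 / 2) * k (z / 2) * r (z - x) := by
  set G : ℝ → ℝ := fun z => (1 / 2) * k (z / 2) * r (z - x)
  have hG : Periodic G 2 := fun z => by
    simp only [G, add_div, div_self (two_ne_zero' ℝ), hk (z / 2), add_sub_right_comm, hr (z - x)]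
  calc interaction k r x = ∫ y in (-1 : ℝ)..1, G (y + x) := by
        simp only [interaction, G, add_sub_cancel_right, add_comm x]
    _ = ∫ z in (-1 + x)..(-1 + x + 2), G z := by
        rw [intervalIntegral.integral_comp_add_right]; congr 1; ring
    _ = ∫ z in (-1 : ℝ)..1, G z := by rw [hG.intervalIntegral_add_eq _ (-1)]; norm_num

-- The change of variables `z = x + y` moves the `x`-dependence from `k` to `r`.
lemma hasDerivAt_interaction (hki : IntervalIntegrable k volume (-1 / 2) (1 / 2))
    (hk : Periodic k 1) (hr : Periodic r 2) (hrd : ContDiff ℝ 1 r) (x : ℝ) :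
    HasDerivAt (interaction k r) (-interaction k (deriv r) x) x := by
  have hweight : IntervalIntegrable (fun z => (1 / 2) * k (z / 2)) volume (-1) 1 := by
    simpa [div_eq_inv_mul] using (hki.comp_mul_left (c := (2 : ℝ)⁻¹)).const_mul (1 / 2)
  have : Continuous (deriv r) := hrd.continuous_deriv le_rfl
  have hsub (x z : ℝ) : HasDerivAt (fun y => r (z - y)) (-deriv r (z - x)) x :=
    HasDerivAt.comp_const_sub z x (hrd.differentiable one_ne_zero _).hasDerivAt
  have hderiv := hasDerivAt_intervalIntegral_smul hweight hsub
    (fun _ => hrd.continuous.comp (by fun_prop)) (by fun_prop) x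
  simpa only [funext (interaction_eq_integral_comp_sub hk hr),
    interaction_eq_integral_comp_sub hk (periodic_deriv hr), smul_eq_mul, mul_neg,
    intervalIntegral.integral_neg] using hderiv

lemma abs_interaction_le {M : ℝ} (hM : ∀ x, |k x| ≤ M) (hr : Periodic r 1) (hrc : Continuous r)
    (x : ℝ) : |interaction k r x| ≤ M * ∫ y in (0 : ℝ)..1, |r y| := by
  have habs : Periodic (fun y => |r y|) 1 := hr.comp abs
  have htwo : ∫ y in (-1 : ℝ)..1, |r y| = 2 * ∫ y in (0 : ℝ)..1, |r y| := by
    have h := habs.intervalIntegral_add_eq_add (-1) 0 fun _ _ => hrc.abs.intervalIntegrable _ _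
    have h' := habs.intervalIntegral_add_eq (-1) 0
    norm_num at h h'
    linarith
  have hpoint (y : ℝ) : |(1 / 2) * k ((x + y) / 2) * r y| ≤ M / 2 * |r y| := by
    rw [abs_mul, abs_mul, abs_of_pos (one_half_pos (α := ℝ)), one_div_mul_eq_div]
    gcongr
    exact hM _
  calc |interaction k r x| ≤ ∫ y in (-1 : ℝ)..1, M / 2 * |r y| := by
        rw [interaction, ← Real.norm_eq_abs]
        exact intervalIntegral.norm_integral_le_of_norm_le (neg_le_self zero_le_one)
          (.of_forall fun y _ => hpoint y) ((hrc.abs.const_mul _).intervalIntegrable _ _)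
    _ = M * ∫ y in (0 : ℝ)..1, |r y| := by
        rw [intervalIntegral.integral_const_mul, htwo]; ring

end Interaction

section ScalarEquation

/-- The function `w` solves `∂ₜw + (a/2) ∂ₓ(w²) + (b/2) K r = 0` at time `t`, where `K` is the
interaction operator with kernel `k`. The first equation of the system is the case
`(a, b) = (α, β)`, and the second is the case `(a, b) = (-α, -β)`. -/
def SolvesForcedBurgersAt (a b : ℝ) (k : ℝ → ℝ) (w r : ℝ → ℝ → ℝ) (t : ℝ) : Prop :=
  ∀ x, timeDeriv w x t + (a / 2) * deriv (fun y => w y t ^ 2) x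
    + (b / 2) * interaction k (fun y => r y t) x = 0

/-- The total variation `∫₀¹ |∂ₓw(x,t)| dx` of a function of period one in space. -/
noncomputable def spaceVariation (w : ℝ → ℝ → ℝ) (t : ℝ) : ℝ :=
  ∫ x in (0 : ℝ)..1, |spaceDeriv w x t|

/-- The regularization of `spaceVariation` by `smoothAbs ε`, which is differentiable in time. -/
noncomputable def smoothVariation (ε : ℝ) (w : ℝ → ℝ → ℝ) (t : ℝ) : ℝ :=
  ∫ x in (0 : ℝ)..1, smoothAbs ε (spaceDeriv w x t)

variable {a b M t ε : ℝ} {k : ℝ → ℝ} {w r : ℝ → ℝ → ℝ}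

lemma spaceVariation_le_smoothVariation (hw : ContDiff ℝ 1 (uncurry w)) (ε t : ℝ) :
    spaceVariation w t ≤ smoothVariation ε w t := by
  have hwx : Continuous fun x => spaceDeriv w x t := (contDiff_slice hw t).continuous_deriv le_rfl
  exact intervalIntegral.integral_mono zero_le_one (hwx.abs.intervalIntegrable _ _)
    (((continuous_smoothAbs ε).comp hwx).intervalIntegrable _ _) fun _ => abs_le_smoothAbs _ _

lemma smoothVariation_le_spaceVariation_add (hw : ContDiff ℝ 1 (uncurry w)) (ε t : ℝ) :
    smoothVariation ε w t ≤ spaceVariation w t + |ε| := by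
  have hwx : Continuous fun x => spaceDeriv w x t := (contDiff_slice hw t).continuous_deriv le_rfl
  calc smoothVariation ε w t ≤ ∫ x in (0 : ℝ)..1, (|spaceDeriv w x t| + |ε|) :=
        intervalIntegral.integral_mono zero_le_one
          (((continuous_smoothAbs ε).comp hwx).intervalIntegrable _ _)
          ((hwx.abs.add_const _).intervalIntegrable _ _) fun _ => smoothAbs_le_abs_add_abs _ _
    _ = spaceVariation w t + |ε| := by
        rw [intervalIntegral.integral_add (hwx.abs.intervalIntegrable _ _)
          intervalIntegrable_const, intervalIntegral.integral_const]
        simp [spaceVariation]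

lemma hasDerivAt_smoothVariation (hε : ε ≠ 0) (hw : ContDiff ℝ 2 (uncurry w)) (t : ℝ) :
    HasDerivAt (smoothVariation ε w)
      (∫ x in (0 : ℝ)..1, smoothSign ε (spaceDeriv w x t) * timeDeriv (spaceDeriv w) x t) t := by
  have hu : ContDiff ℝ 1 (uncurry (spaceDeriv w)) := contDiff_spaceDeriv hw (by norm_num)
  have hut : Continuous (uncurry (timeDeriv (spaceDeriv w))) :=
    (contDiff_timeDeriv (m := 0) hu (by norm_num)).continuous
  have hchain (s x : ℝ) : HasDerivAt (fun s => smoothAbs ε (spaceDeriv w x s))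
      (smoothSign ε (spaceDeriv w x s) * timeDeriv (spaceDeriv w) x s) s :=
    (hasDerivAt_smoothAbs hε _).comp s
      (hasDerivAt_time (hu.differentiable one_ne_zero) x s).differentiableAt.hasDerivAt
  have hderiv := hasDerivAt_intervalIntegral_smul (φ := 1) (a := 0) (b := 1)
    intervalIntegrable_const hchain
    (fun s => (continuous_smoothAbs ε).comp (hu.continuous.uncurry_right s))
    ((((continuous_smoothSign hε).comp hu.continuous).mul hut).comp continuous_swap) t
  simp only [Pi.one_apply, one_smul] at hderiv
  exact hderiv

lemma SolvesForcedBurgersAt.timeDeriv_spaceDeriv (h : SolvesForcedBurgersAt a b k w r t)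
    (hki : IntervalIntegrable k volume (-1 / 2) (1 / 2)) (hk : Periodic k 1)
    (hw : ContDiff ℝ 2 (uncurry w)) (hr : ContDiff ℝ 1 (uncurry r))
    (hrper : Periodic (fun y => r y t) 2) (x : ℝ) :
    timeDeriv (spaceDeriv w) x t +
        a * (spaceDeriv w x t ^ 2 + w x t * spaceDeriv (spaceDeriv w) x t) =
      b / 2 * interaction k (fun y => spaceDeriv r y t) x := by
  have hf : ContDiff ℝ 2 (fun y => w y t) := contDiff_slice hw t
  have hwd (y : ℝ) : HasDerivAt (fun y => w y t) (spaceDeriv w y t) y :=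
    (hf.differentiable two_ne_zero y).hasDerivAt
  have hwxd : HasDerivAt (fun y => spaceDeriv w y t) (spaceDeriv (spaceDeriv w) x t) x :=
    ((hf.deriv' (n := 1)).differentiable one_ne_zero x).hasDerivAt
  have htime : (fun y => timeDeriv w y t) = fun y =>
      -a * (w y t * spaceDeriv w y t) - b / 2 * interaction k (fun z => r z t) y := by
    funext y
    have hsq : deriv (fun z => w z t ^ 2) y = 2 * w y t * spaceDeriv w y t := by
      simpa using ((hwd y).fun_pow 2).deriv
    linear_combination h y - a / 2 * hsq
  have hderiv : deriv (fun y => timeDeriv w y t) x =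
      -a * (spaceDeriv w x t * spaceDeriv w x t + w x t * spaceDeriv (spaceDeriv w) x t) -
        b / 2 * -interaction k (fun y => spaceDeriv r y t) x := by
    rw [htime]
    exact ((((hwd x).mul hwxd).const_mul (-a)).sub
      ((hasDerivAt_interaction hki hk hrper (contDiff_slice hr t) x).const_mul (b / 2))).deriv
  rw [timeDeriv_spaceDeriv_comm hw, spaceDeriv, hderiv]
  ring

lemma SolvesForcedBurgersAt.deriv_smoothVariation_le (h : SolvesForcedBurgersAt a b k w r t)
    (hε : ε ≠ 0) (hki : IntervalIntegrable k volume (-1 / 2) (1 / 2)) (hk : Periodic k 1)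
    (hM : ∀ x, |k x| ≤ M) (hw : ContDiff ℝ 2 (uncurry w)) (hwper : Periodic (fun y => w y t) 1)
    (hr : ContDiff ℝ 1 (uncurry r)) (hrper : Periodic (fun y => r y t) 1) :
    deriv (smoothVariation ε w) t ≤ |a| * ε ^ 2 + |b| / 2 * (M * spaceVariation r t) := by
  have hut : Continuous (uncurry (timeDeriv (spaceDeriv w))) :=
    (contDiff_timeDeriv (m := 0) (contDiff_spaceDeriv (m := 1) hw (by norm_num))
      (by norm_num)).continuous
  have hrper₂ : Periodic (fun y => r y t) 2 := by simpa using hrper.nat_mul 2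
  rw [(hasDerivAt_smoothVariation hε hw t).deriv]
  refine intervalIntegral_smoothSign_mul_le hε (contDiff_slice hw t) hwper
    (hut.uncurry_right t) fun x => ?_
  calc |timeDeriv (spaceDeriv w) x t +
          a * (spaceDeriv w x t ^ 2 + w x t * spaceDeriv (spaceDeriv w) x t)|
      = |b| / 2 * |interaction k (fun y => spaceDeriv r y t) x| := by
        rw [h.timeDeriv_spaceDeriv hki hk hw hr hrper₂, abs_mul, abs_div, abs_two]
    _ ≤ |b| / 2 * (M * spaceVariation r t) := by
        gcongr
        exact abs_interaction_le hM (periodic_deriv hrper)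
          ((contDiff_slice hr t).continuous_deriv le_rfl) x

end ScalarEquation

section Gronwall

lemma le_gronwallBound_of_deriv_le {F : ℝ → ℝ} {δ K η a b : ℝ} (hF : Differentiable ℝ F)
    (ha : F a ≤ δ) (hbound : ∀ s ∈ Ico a b, deriv F s ≤ K * F s + η) {t : ℝ} (ht : t ∈ Icc a b) :
    F t ≤ gronwallBound δ K η (t - a) :=
  le_gronwallBound_of_liminf_deriv_right_le hF.continuous.continuousOn
    (fun s _ _ hr => (hF s).hasDerivAt.hasDerivWithinAt.liminf_right_slope_le hr) ha hbound t ht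

lemma tendsto_gronwallBound {ι : Type*} {l : Filter ι} {δ η : ι → ℝ} {δ₀ η₀ : ℝ}
    (hδ : Tendsto δ l (𝓝 δ₀)) (hη : Tendsto η l (𝓝 η₀)) (K x : ℝ) :
    Tendsto (fun i => gronwallBound (δ i) K (η i) x) l (𝓝 (gronwallBound δ₀ K η₀ x)) := by
  unfold gronwallBound
  split_ifs
  · exact hδ.add (hη.mul_const x)
  · exact (hδ.mul_const _).add ((hη.div_const K).mul_const _)

end Gronwall

namespace IsClassicalSolution

variable {α β T t ε : ℝ} {σ₂ : ℝ → ℝ} {σ₁ σ₃ : ℝ → ℝ → ℝ} {C : ℝ≥0}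

lemma solvesForcedBurgersAt_fst (hsol : IsClassicalSolution α β σ₂ T σ₁ σ₃)
    (h₁ : ContDiff ℝ 2 (uncurry σ₁)) (ht : t ∈ Ico 0 T) :
    SolvesForcedBurgersAt α β (deriv σ₂) σ₁ σ₃ t := fun x => by
  rw [← derivWithin_time_eq_timeDeriv (h₁.differentiable two_ne_zero)
    (uniqueDiffOn_Icc (ht.1.trans_lt ht.2) t (Ico_subset_Icc_self ht))]
  exact (hsol.2.2 x t (Ico_subset_Icc_self ht)).1

lemma solvesForcedBurgersAt_snd (hsol : IsClassicalSolution α β σ₂ T σ₁ σ₃)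
    (h₃ : ContDiff ℝ 2 (uncurry σ₃)) (ht : t ∈ Ico 0 T) :
    SolvesForcedBurgersAt (-α) (-β) (deriv σ₂) σ₃ σ₁ t := fun x => by
  have heq := (hsol.2.2 x t (Ico_subset_Icc_self ht)).2
  rw [derivWithin_time_eq_timeDeriv (h₃.differentiable two_ne_zero)
    (uniqueDiffOn_Icc (ht.1.trans_lt ht.2) t (Ico_subset_Icc_self ht))] at heq
  rw [interaction]
  linear_combination heq

lemma deriv_smoothVariation_add_le (hsol : IsClassicalSolution α β σ₂ T σ₁ σ₃)
    (hσ₂ : LipschitzWith C σ₂) (hper : Periodic σ₂ 1) (h₁ : ContDiff ℝ 2 (uncurry σ₁))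
    (h₃ : ContDiff ℝ 2 (uncurry σ₃)) (hε : ε ≠ 0) (ht : t ∈ Ico 0 T) :
    deriv (fun s => smoothVariation ε σ₁ s + smoothVariation ε σ₃ s) t ≤
      |β| / 2 * C * (smoothVariation ε σ₁ t + smoothVariation ε σ₃ t) + 2 * |α| * ε ^ 2 := by
  have hk : Periodic (deriv σ₂) 1 := periodic_deriv hper
  have hM (x : ℝ) : |deriv σ₂ x| ≤ C := norm_deriv_le_of_lipschitz hσ₂
  have hki : IntervalIntegrable (deriv σ₂) volume (-1 / 2) (1 / 2) :=
    intervalIntegrable_const.mono_fun (g := deriv σ₂) (f := fun _ => (C : ℝ))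
      (measurable_deriv σ₂).aestronglyMeasurable (.of_forall fun x => (hM x).trans (le_abs_self _))
  have h₁' : ContDiff ℝ 1 (uncurry σ₁) := h₁.of_le one_le_two
  have h₃' : ContDiff ℝ 1 (uncurry σ₃) := h₃.of_le one_le_two
  have hσ₁per : Periodic (fun x => σ₁ x t) 1 := fun x => hsol.1 x t
  have hσ₃per : Periodic (fun x => σ₃ x t) 1 := fun x => hsol.2.1 x t
  have hd₁ := (hsol.solvesForcedBurgersAt_fst h₁ ht).deriv_smoothVariation_le hε hki hk hM
    h₁ hσ₁per h₃' hσ₃per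
  have hd₃ := (hsol.solvesForcedBurgersAt_snd h₃ ht).deriv_smoothVariation_le hε hki hk hM
    h₃ hσ₃per h₁' hσ₁per
  rw [abs_neg, abs_neg] at hd₃
  have hle : |β| / 2 * C * (spaceVariation σ₁ t + spaceVariation σ₃ t) ≤
      |β| / 2 * C * (smoothVariation ε σ₁ t + smoothVariation ε σ₃ t) := by
    gcongr
    · exact spaceVariation_le_smoothVariation h₁' ε t
    · exact spaceVariation_le_smoothVariation h₃' ε t
  rw [deriv_fun_add (hasDerivAt_smoothVariation hε h₁ t).differentiableAt
    (hasDerivAt_smoothVariation hε h₃ t).differentiableAt]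
  linarith

lemma spaceVariation_add_le_gronwallBound (hsol : IsClassicalSolution α β σ₂ T σ₁ σ₃)
    (hσ₂ : LipschitzWith C σ₂) (hper : Periodic σ₂ 1) (h₁ : ContDiff ℝ 2 (uncurry σ₁))
    (h₃ : ContDiff ℝ 2 (uncurry σ₃)) (hε : ε ≠ 0) (ht : t ∈ Icc 0 T) :
    spaceVariation σ₁ t + spaceVariation σ₃ t ≤
      gronwallBound (spaceVariation σ₁ 0 + spaceVariation σ₃ 0 + 2 * |ε|) (|β| / 2 * C)
        (2 * |α| * ε ^ 2) t := by
  have h₁' : ContDiff ℝ 1 (uncurry σ₁) := h₁.of_le one_le_two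
  have h₃' : ContDiff ℝ 1 (uncurry σ₃) := h₃.of_le one_le_two
  have hdiff : Differentiable ℝ fun s => smoothVariation ε σ₁ s + smoothVariation ε σ₃ s :=
    fun s => (hasDerivAt_smoothVariation hε h₁ s).differentiableAt.fun_add
      (hasDerivAt_smoothVariation hε h₃ s).differentiableAt
  have hinit : smoothVariation ε σ₁ 0 + smoothVariation ε σ₃ 0 ≤
      spaceVariation σ₁ 0 + spaceVariation σ₃ 0 + 2 * |ε| := by
    linarith [smoothVariation_le_spaceVariation_add h₁' ε 0,
      smoothVariation_le_spaceVariation_add h₃' ε 0]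
  calc spaceVariation σ₁ t + spaceVariation σ₃ t
      ≤ smoothVariation ε σ₁ t + smoothVariation ε σ₃ t :=
        add_le_add (spaceVariation_le_smoothVariation h₁' ε t)
          (spaceVariation_le_smoothVariation h₃' ε t)
    _ ≤ _ := by
        simpa only [sub_zero] using le_gronwallBound_of_deriv_le hdiff hinit
          (fun s hs => hsol.deriv_smoothVariation_add_le hσ₂ hper h₁ h₃ hε hs) ht

end IsClassicalSolution

theorem classical_solution_derivative_growth_general {α β T t : ℝ} {σ₂ : ℝ → ℝ} {C : ℝ≥0}
    (hσ₂ : LipschitzWith C σ₂) (hper : Periodic σ₂ 1) {σ₁ σ₃ : ℝ → ℝ → ℝ}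
    (h₁ : ContDiff ℝ 2 (uncurry σ₁)) (h₃ : ContDiff ℝ 2 (uncurry σ₃))
    (hsol : IsClassicalSolution α β σ₂ T σ₁ σ₃) (ht : t ∈ Icc 0 T) :
    spaceVariation σ₁ t + spaceVariation σ₃ t ≤
      (spaceVariation σ₁ 0 + spaceVariation σ₃ 0) * Real.exp (|β| / 2 * C * t) := by
  set V₀ : ℝ := spaceVariation σ₁ 0 + spaceVariation σ₃ 0
  have hδ : Tendsto (fun ε : ℝ => V₀ + 2 * |ε|) (𝓝[≠] 0) (𝓝 V₀) :=
    tendsto_nhdsWithin_of_tendsto_nhds (Continuous.tendsto' (by fun_prop) _ _ (by simp))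
  have hη : Tendsto (fun ε : ℝ => 2 * |α| * ε ^ 2) (𝓝[≠] 0) (𝓝 0) :=
    tendsto_nhdsWithin_of_tendsto_nhds (Continuous.tendsto' (by fun_prop) _ _ (by simp))
  rw [← gronwallBound_ε0]
  exact ge_of_tendsto (tendsto_gronwallBound hδ hη _ t) <| eventually_mem_nhdsWithin.mono
    fun ε hε => hsol.spaceVariation_add_le_gronwallBound hσ₂ hper h₁ h₃ hε ht

/-- the `L¹` growth estimate for the space derivatives of a
`C²` classical solution:
`‖∂ₓσ₁(·,t)‖_{L¹} + ‖∂ₓσ₃(·,t)‖_{L¹} ≤ (‖∂ₓσ₁(·,0)‖_{L¹} + ‖∂ₓσ₃(·,0)‖_{L¹}) e^{(β/2) M̃_E t}`. -/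
theorem classical_solution_derivative_growth
    (α β : ℝ) (hα : 0 < α) (hβ : 0 < β)
    (σ₂ : ℝ → ℝ) (hσ₂C1 : ContDiff ℝ 1 σ₂)
    (hσ₂per : ∀ x, σ₂ (x + 1 / 2) = σ₂ x)
    (ME : ℝ) (hME : IsGreatest ((fun x => |deriv σ₂ x|) '' Set.Icc 0 (1 / 2)) ME)
    (T : ℝ) (hT : 0 ≤ T)
    (σ₁ σ₃ : ℝ → ℝ → ℝ)
    (h₁C2 : ContDiff ℝ 2 (fun p : ℝ × ℝ => σ₁ p.1 p.2))
    (h₃C2 : ContDiff ℝ 2 (fun p : ℝ × ℝ => σ₃ p.1 p.2))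
    (hsol : IsClassicalSolution α β σ₂ T σ₁ σ₃) :
    ∀ t ∈ Set.Icc (0 : ℝ) T,
      (∫ x in (0 : ℝ)..1, |deriv (fun y => σ₁ y t) x|)
          + (∫ x in (0 : ℝ)..1, |deriv (fun y => σ₃ y t) x|) ≤
        ((∫ x in (0 : ℝ)..1, |deriv (fun y => σ₁ y 0) x|)
            + (∫ x in (0 : ℝ)..1, |deriv (fun y => σ₃ y 0) x|))
          * Real.exp ((β / 2) * ME * t) := by
  intro t ht
  have hME₀ : 0 ≤ ME := by
    obtain ⟨x, -, hx⟩ := hME.1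
    exact hx ▸ abs_nonneg _
  lift ME to ℝ≥0 using hME₀
  have hlip : LipschitzWith ME σ₂ :=
    lipschitzWith_of_periodic_of_abs_deriv_le (hσ₂C1.differentiable one_ne_zero) hσ₂per
      one_half_pos fun x hx => hME.2 (mem_image_of_mem _ hx)
  have hper : Periodic σ₂ 1 := by simpa using Periodic.nat_mul hσ₂per 2
  have hgrowth := classical_solution_derivative_growth_general hlip hper h₁C2 h₃C2 hsol ht
  rwa [abs_of_pos hβ] at hgrowth
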